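/- Let μ be a probability measure on ℝ^d and let y > 0. Suppose that ∫_0^y ‖ μ * (∂n_u/∂u) ‖₁ du < ∞ (the integrand being the L¹ norm of the function x ↦ ∫ (∂/∂u n_u)(x−z) dμ(z)). Then μ is absolutely continuous with respect to Lebesgue measure on ℝ^d. -/

import Mathlib

open MeasureTheory Real

/-- Density of the centered Gaussian on `ℝ^d` with covariance matrix `u • I`. -/
noncomputable def gaussD (d : ℕ) (u : ℝ) (x : EuclideanSpace ℝ (Fin d)) : ℝ :=
  (2 * Real.pi * u) ^ (-(d : ℝ) / 2) * Real.exp (-‖x‖ ^ 2 / (2 * u))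

/-- `∂/∂u n_u (x)`. -/
noncomputable def gaussDy (d : ℕ) (u : ℝ) (x : EuclideanSpace ℝ (Fin d)) : ℝ :=
  deriv (fun v => gaussD d v x) u

/-!
By the fundamental theorem of calculus, for `0 < s ≤ t` the densities of `μ ∗ n_s` and `μ ∗ n_t`
differ in `L¹` by at most `ε(t) = ∫_0^t ‖μ ∗ ∂_u n_u‖₁ du`, which is small for small `t`.
Letting `s → 0`, the portmanteau inequality gives `μ U ≤ (μ ∗ n_t) U + ε(t)` for every open `U`.
A Lebesgue-null set `A` is also null for `μ ∗ n_t`, so shrinking `U` to `A` leaves `μ A ≤ ε(t)`.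
-/

open Filter Module Set Topology
open scoped ENNReal

theorem absolutelyContinuous_of_forall_isOpen_le_add {X : Type*} [TopologicalSpace X]
    [MeasurableSpace X] {μ m : Measure X}
    (h : ∀ ε : ℝ≥0∞, 0 < ε → ∃ ν : Measure X, ν.OuterRegular ∧ ν ≪ m ∧
      ∀ U, IsOpen U → μ U ≤ ν U + ε) :
    μ ≪ m := by
  intro A hA
  refine nonpos_iff_eq_zero.1 (le_of_forall_pos_le_add fun ε hε => ?_)
  obtain ⟨δ, hδ, hδε⟩ := exists_between hε
  obtain ⟨ν, _, hνm, hμν⟩ := h (ε - δ) (tsub_pos_of_lt hδε)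
  obtain ⟨U, hAU, hU, hνU⟩ := A.exists_isOpen_lt_of_lt (μ := ν) δ (by rwa [hνm hA])
  calc μ A ≤ μ U := measure_mono hAU
    _ ≤ ν U + (ε - δ) := hμν U hU
    _ ≤ δ + (ε - δ) := by gcongr
    _ = 0 + ε := by rw [add_tsub_cancel_of_le hδε.le, zero_add]

section Convolution

variable {M : Type*} [AddMonoid M] [MeasurableSpace M] [MeasurableAdd₂ M]

theorem conv_apply_eq_lintegral {μ ρ : Measure M} [SFinite ρ] {s : Set M} (hs : MeasurableSet s) :
    (μ ∗ ρ) s = ∫⁻ z, ρ ((z + ·) ⁻¹' s) ∂μ := by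
  rw [← lintegral_indicator_one hs, Measure.lintegral_conv (measurable_one.indicator hs)]
  refine lintegral_congr fun z => ?_
  rw [← lintegral_indicator_one (measurable_const_add z hs)]
  rfl

theorem measure_le_liminf_conv_of_isOpen [TopologicalSpace M] [ContinuousAdd M]
    [OpensMeasurableSpace M] {ι : Type*} {l : Filter ι} [l.IsCountablyGenerated] [l.NeBot]
    {μ : Measure M} {ρ : ι → Measure M} [∀ i, SFinite (ρ i)]
    (hρ : ∀ V ∈ 𝓝 (0 : M), Tendsto (fun i => ρ i V) l (𝓝 1)) {U : Set M} (hU : IsOpen U) :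
    μ U ≤ liminf (fun i => (μ ∗ ρ i) U) l := by
  have hmeas (i : ι) : Measurable fun z => ρ i ((z + ·) ⁻¹' U) :=
    measurable_measure_prodMk_left (measurable_add hU.measurableSet)
  have hlim {z : M} (hz : z ∈ U) : liminf (fun i => ρ i ((z + ·) ⁻¹' U)) l = 1 :=
    (hρ _ ((continuous_const_add z).continuousAt.preimage_mem_nhds
      (hU.mem_nhds (by simpa using hz)))).liminf_eq
  calc μ U = ∫⁻ z, U.indicator 1 z ∂μ := (lintegral_indicator_one hU.measurableSet).symm
    _ ≤ ∫⁻ z, liminf (fun i => ρ i ((z + ·) ⁻¹' U)) l ∂μ :=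
      lintegral_mono <| indicator_le fun z hz => (hlim hz).ge
    _ ≤ liminf (fun i => ∫⁻ z, ρ i ((z + ·) ⁻¹' U) ∂μ) l := lintegral_liminf_le hmeas
    _ = liminf (fun i => (μ ∗ ρ i) U) l := by
      simp only [conv_apply_eq_lintegral hU.measurableSet]

end Convolution

section AddGroup

variable {G : Type*} [AddGroup G] [MeasurableSpace G] [MeasurableAdd₂ G] [MeasurableNeg G]
  {m μ : Measure G} [SFinite m]

theorem conv_withDensity_eq_withDensity_lintegral [m.IsAddLeftInvariant] [SFinite μ]
    {f : G → ℝ≥0∞} (hf : Measurable f) :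
    μ ∗ m.withDensity f = m.withDensity fun x => ∫⁻ z, f (-z + x) ∂μ := by
  refine Measure.ext_of_lintegral _ fun φ hφ => ?_
  have hdensity : Measurable fun x => ∫⁻ z, f (-z + x) ∂μ :=
    Measurable.lintegral_prod_right' (f := fun p : G × G => f (-p.2 + p.1)) (by fun_prop)
  calc ∫⁻ x, φ x ∂(μ ∗ m.withDensity f)
      = ∫⁻ z, ∫⁻ w, φ (z + w) ∂m.withDensity f ∂μ := Measure.lintegral_conv hφ
    _ = ∫⁻ z, ∫⁻ w, f (-z + (z + w)) * φ (z + w) ∂m ∂μ := by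
        refine lintegral_congr fun z => ?_
        simp only [neg_add_cancel_left]
        exact lintegral_withDensity_eq_lintegral_mul m hf (by fun_prop)
    _ = ∫⁻ z, ∫⁻ x, f (-z + x) * φ x ∂m ∂μ :=
        lintegral_congr fun z => lintegral_add_left_eq_self (fun x => f (-z + x) * φ x) z
    _ = ∫⁻ x, ∫⁻ z, f (-z + x) * φ x ∂μ ∂m :=
        lintegral_lintegral_swap (Measurable.aemeasurable (by fun_prop))
    _ = ∫⁻ x, (∫⁻ z, f (-z + x) ∂μ) * φ x ∂m :=
        lintegral_congr fun x => lintegral_mul_const _ (by fun_prop)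
    _ = ∫⁻ x, φ x ∂m.withDensity fun x => ∫⁻ z, f (-z + x) ∂μ :=
        (lintegral_withDensity_eq_lintegral_mul m hdensity hφ).symm

theorem integrable_integral_sub [m.IsAddRightInvariant] [IsFiniteMeasure μ] {F : Type*}
    [NormedAddCommGroup F] [NormedSpace ℝ F] {f : G → F} (hf : Integrable f m) :
    Integrable (fun x => ∫ z, f (x - z) ∂μ) m := by
  have hmeas : AEStronglyMeasurable (fun p : G × G => f (p.1 - p.2)) (m.prod μ) :=
    hf.aestronglyMeasurable.comp_quasiMeasurePreserving
      (quasiMeasurePreserving_sub_of_right_invariant m μ)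
  refine Integrable.integral_prod_left (f := fun p : G × G => f (p.1 - p.2)) ?_
  refine (integrable_prod_iff' hmeas).2 ⟨.of_forall hf.comp_sub_right, ?_⟩
  simp only [integral_sub_right_eq_self (‖f ·‖), integrable_const]

end AddGroup

theorem tendsto_setLIntegral_Ioc_nhdsGT {a b : ℝ} (hab : a < b) {f : ℝ → ℝ≥0∞}
    (hf : ∫⁻ u in Ioo a b, f u ≠ ∞) :
    Tendsto (fun t => ∫⁻ u in Ioc a t, f u) (𝓝[>] a) (𝓝 0) := by
  have hvol : Tendsto (fun t => volume.restrict (Ioo a b) (Ioc a t)) (𝓝[>] a) (𝓝 0) := by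
    have hlen : Tendsto (fun t => ENNReal.ofReal (t - a)) (𝓝[>] a) (𝓝 0) := by
      have := (ENNReal.continuous_ofReal.comp (continuous_sub_right a)).tendsto a
      simpa [Function.comp_def] using this.mono_left nhdsWithin_le_nhds
    refine tendsto_of_tendsto_of_tendsto_of_le_of_le tendsto_const_nhds hlen
      (fun _ => zero_le) fun t => ?_
    exact (Measure.restrict_apply_le _ _).trans_eq Real.volume_Ioc
  refine (tendsto_setLIntegral_zero hf hvol).congr' ?_
  filter_upwards [Ioo_mem_nhdsGT hab] with t ht
  rw [Measure.restrict_restrict measurableSet_Ioc,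
    inter_eq_left.2 (Ioc_subset_Ioo_right ht.2)]

section ParametricIntegral

variable {Z F : Type*} [MeasurableSpace Z] {μ : Measure Z} [SFinite μ] [NormedAddCommGroup F]
  [NormedSpace ℝ F] [CompleteSpace F] {g g' : ℝ → Z → F} {s t : ℝ}

theorem intervalIntegral_integral_eq_sub_of_hasDerivAt
    (hderiv : ∀ z, ∀ u ∈ uIcc s t, HasDerivAt (g · z) (g' u z) u)
    (hgs : Integrable (g s) μ) (hgt : Integrable (g t) μ)
    (hg' : Integrable (Function.uncurry g') ((volume.restrict (uIoc s t)).prod μ)) :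
    ∫ u in s..t, ∫ z, g' u z ∂μ = (∫ z, g t z ∂μ) - ∫ z, g s z ∂μ := by
  rw [intervalIntegral_integral_swap hg', ← integral_sub hgt hgs]
  refine integral_congr_ae ?_
  filter_upwards [hg'.prod_left_ae] with z hz
  exact intervalIntegral.integral_eq_sub_of_hasDerivAt (hderiv z) (intervalIntegrable_iff.2 hz)

theorem enorm_integral_sub_integral_le_lintegral_of_hasDerivAt (hst : s ≤ t)
    (hderiv : ∀ z, ∀ u ∈ Icc s t, HasDerivAt (g · z) (g' u z) u)
    (hgs : Integrable (g s) μ) (hgt : Integrable (g t) μ)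
    (hg' : Integrable (Function.uncurry g') ((volume.restrict (Ioc s t)).prod μ)) :
    ‖(∫ z, g t z ∂μ) - ∫ z, g s z ∂μ‖ₑ ≤ ∫⁻ u in Ioc s t, ‖∫ z, g' u z ∂μ‖ₑ := by
  rw [← uIcc_of_le hst] at hderiv
  rw [← uIoc_of_le hst] at hg'
  rw [← intervalIntegral_integral_eq_sub_of_hasDerivAt hderiv hgs hgt hg',
    intervalIntegral.integral_of_le hst]
  exact enorm_integral_le_lintegral_enorm _

end ParametricIntegral

section HeatKernel

variable {E : Type*} [NormedAddCommGroup E] [InnerProductSpace ℝ E]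

/-- Density of the centered Gaussian with covariance `u • id` on a Euclidean space, i.e. the
heat kernel of `∂ᵤ = ½ Δ`. The formula is meaningful only for `0 < u`. -/
noncomputable def heatKernel (u : ℝ) (x : E) : ℝ :=
  (2 * π * u) ^ (-(finrank ℝ E : ℝ) / 2) * exp (-‖x‖ ^ 2 / (2 * u))

/-- Closed form of the derivative `∂ᵤ` of `heatKernel u x`, jointly measurable in `(u, x)`. -/
noncomputable def heatKernelDeriv (u : ℝ) (x : E) : ℝ :=
  heatKernel u x * (‖x‖ ^ 2 / (2 * u ^ 2) - finrank ℝ E / (2 * u))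

variable {s t u : ℝ}

theorem hasDerivAt_heatKernel (hu : 0 < u) (x : E) :
    HasDerivAt (fun v => heatKernel v x) (heatKernelDeriv u x) u := by
  have hpos : 0 < 2 * π * u := by positivity
  have hpow : HasDerivAt (fun v => (2 * π * v) ^ (-(finrank ℝ E : ℝ) / 2))
      (2 * π * (-(finrank ℝ E : ℝ) / 2) * (2 * π * u) ^ (-(finrank ℝ E : ℝ) / 2 - 1)) u :=
    (hasDerivAt_const_mul (2 * π)).rpow_const (Or.inl hpos.ne')
  have hexponent : HasDerivAt (fun v => -‖x‖ ^ 2 / (2 * v)) (‖x‖ ^ 2 / (2 * u ^ 2)) u := by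
    refine ((hasDerivAt_const u (-‖x‖ ^ 2)).div (hasDerivAt_const_mul 2)
      (by positivity)).congr_deriv ?_
    field_simp
    ring
  refine (hpow.mul hexponent.exp).congr_deriv ?_
  rw [rpow_sub_one hpos.ne', heatKernelDeriv, heatKernel]
  field_simp
  ring

theorem heatKernel_nonneg (hu : 0 ≤ u) (x : E) : 0 ≤ heatKernel u x := by
  unfold heatKernel
  positivity

theorem heatKernel_le (hu : 0 ≤ u) (x : E) :
    heatKernel u x ≤ (2 * π * u) ^ (-(finrank ℝ E : ℝ) / 2) := by
  refine mul_le_of_le_one_right (by positivity) (exp_le_one_iff.2 ?_)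
  exact div_nonpos_of_nonpos_of_nonneg (neg_nonpos.2 (sq_nonneg _)) (by positivity)

-- Half of the Gaussian exponent is kept aside to absorb polynomial factors in `x` and tails.
theorem heatKernel_eq_exp_mul_heatKernel_two_mul (hu : 0 < u) (x : E) :
    heatKernel u x =
      2 ^ (finrank ℝ E / 2 : ℝ) * exp (-(‖x‖ ^ 2 / (4 * u))) * heatKernel (2 * u) x := by
  have hconst : (2 * π * u) ^ (-(finrank ℝ E : ℝ) / 2) =
      2 ^ (finrank ℝ E / 2 : ℝ) * (2 * π * (2 * u)) ^ (-(finrank ℝ E : ℝ) / 2) := by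
    have hpos : 0 ≤ 2 * π * u := by positivity
    rw [show 2 * π * (2 * u) = 2 * (2 * π * u) by ring, mul_rpow zero_le_two hpos,
      ← mul_assoc, ← rpow_add two_pos, neg_div, add_neg_cancel, rpow_zero, one_mul]
  have hexp : exp (-‖x‖ ^ 2 / (2 * u)) =
      exp (-(‖x‖ ^ 2 / (4 * u))) * exp (-‖x‖ ^ 2 / (2 * (2 * u))) := by
    rw [← exp_add]
    congr 1
    field_simp
    ring
  rw [heatKernel, heatKernel, hconst, hexp]
  ring

theorem abs_heatKernelDeriv_le (hu : 0 < u) (x : E) :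
    |heatKernelDeriv u x| ≤
      2 ^ (finrank ℝ E / 2 : ℝ) * (2 + finrank ℝ E / 2) / u * heatKernel (2 * u) x := by
  set v := ‖x‖ ^ 2 / (4 * u) with hv
  have hv0 : 0 ≤ v := by positivity
  have hexp : exp (-v) ≤ 1 := exp_le_one_iff.2 (neg_nonpos.2 hv0)
  have hmul_exp : v * exp (-v) ≤ 1 := by
    rw [exp_neg, mul_inv_le_iff₀ (exp_pos v)]
    linarith [add_one_le_exp v]
  have hfactor : |‖x‖ ^ 2 / (2 * u ^ 2) - finrank ℝ E / (2 * u)| ≤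
      (2 * v + finrank ℝ E / 2) / u := by
    refine (abs_sub _ _).trans_eq ?_
    rw [abs_of_nonneg (by positivity), abs_of_nonneg (by positivity), hv]
    field_simp
    ring
  have hK : 0 ≤ heatKernel (2 * u) x := heatKernel_nonneg (by positivity) x
  calc |heatKernelDeriv u x|
      = heatKernel u x * |‖x‖ ^ 2 / (2 * u ^ 2) - finrank ℝ E / (2 * u)| := by
        rw [heatKernelDeriv, abs_mul, abs_of_nonneg (heatKernel_nonneg hu.le x)]
    _ ≤ heatKernel u x * ((2 * v + finrank ℝ E / 2) / u) :=
        mul_le_mul_of_nonneg_left hfactor (heatKernel_nonneg hu.le x)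
    _ = 2 ^ (finrank ℝ E / 2 : ℝ) * (2 * (v * exp (-v)) + finrank ℝ E / 2 * exp (-v)) / u *
          heatKernel (2 * u) x := by
        rw [heatKernel_eq_exp_mul_heatKernel_two_mul hu x]
        ring
    _ ≤ 2 ^ (finrank ℝ E / 2 : ℝ) * (2 * 1 + finrank ℝ E / 2 * 1) / u *
          heatKernel (2 * u) x := by gcongr
    _ = _ := by ring

theorem exists_forall_abs_heatKernelDeriv_le (hs : 0 < s) :
    ∃ C, ∀ u, s ≤ u → ∀ x : E, |heatKernelDeriv u x| ≤ C := by
  refine ⟨2 ^ (finrank ℝ E / 2 : ℝ) * (2 + finrank ℝ E / 2) / s *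
    (2 * π * (2 * s)) ^ (-(finrank ℝ E : ℝ) / 2), fun u hsu x => ?_⟩
  have hu : 0 < u := hs.trans_le hsu
  have hK : heatKernel (2 * u) x ≤ (2 * π * (2 * s)) ^ (-(finrank ℝ E : ℝ) / 2) :=
    (heatKernel_le (by positivity) x).trans <| rpow_le_rpow_of_nonpos (by positivity) (by gcongr)
      (div_nonpos_of_nonpos_of_nonneg (neg_nonpos.2 (Nat.cast_nonneg _)) zero_le_two)
  have hK0 : 0 ≤ heatKernel (2 * u) x := heatKernel_nonneg (by positivity) x
  refine (abs_heatKernelDeriv_le hu x).trans ?_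
  gcongr

variable [MeasurableSpace E] [BorelSpace E]

@[fun_prop]
theorem measurable_heatKernel : Measurable (Function.uncurry (heatKernel (E := E))) := by
  unfold Function.uncurry heatKernel
  fun_prop

@[fun_prop]
theorem measurable_heatKernelDeriv : Measurable (Function.uncurry (heatKernelDeriv (E := E))) :=
  measurable_heatKernel.mul
    (g := fun p : ℝ × E => ‖p.2‖ ^ 2 / (2 * p.1 ^ 2) - finrank ℝ E / (2 * p.1)) (by fun_prop)

theorem integrable_heatKernel_sub {μ : Measure E} [IsFiniteMeasure μ] (hu : 0 ≤ u) (x : E) :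
    Integrable (fun z => heatKernel u (x - z)) μ := by
  refine .of_bound (Measurable.aestronglyMeasurable (by fun_prop))
    ((2 * π * u) ^ (-(finrank ℝ E : ℝ) / 2)) (.of_forall fun z => ?_)
  exact (norm_of_nonneg (heatKernel_nonneg hu _)).trans_le (heatKernel_le hu _)

theorem integrable_heatKernelDeriv_sub {μ : Measure E} [IsFiniteMeasure μ] (hs : 0 < s) (x : E) :
    Integrable (Function.uncurry fun u z => heatKernelDeriv u (x - z))
      ((volume.restrict (Ioc s t)).prod μ) := by
  have hmeas : Measurable fun p : ℝ × E => heatKernelDeriv p.1 (x - p.2) := by fun_prop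
  have hfst : ∀ᵐ p ∂(volume.restrict (Ioc s t)).prod μ, p.1 ∈ Ioc s t :=
    Measure.quasiMeasurePreserving_fst.ae (ae_restrict_mem measurableSet_Ioc)
  obtain ⟨C, hC⟩ := exists_forall_abs_heatKernelDeriv_le (E := E) hs
  refine .of_bound hmeas.aestronglyMeasurable C ?_
  filter_upwards [hfst] with p hp
  exact hC _ hp.1.le _

variable [FiniteDimensional ℝ E]

theorem integral_heatKernel (hu : 0 < u) : ∫ x : E, heatKernel u x = 1 := by
  have hexponent (x : E) : -‖x‖ ^ 2 / (2 * u) = -(1 / (2 * u)) * ‖x‖ ^ 2 := by ring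
  simp only [heatKernel, hexponent]
  rw [integral_const_mul, GaussianFourier.integral_rexp_neg_mul_sq_norm (by positivity),
    show π / (1 / (2 * u)) = 2 * π * u by field_simp, ← rpow_add (by positivity), neg_div,
    neg_add_cancel, rpow_zero]

theorem integrable_heatKernel (hu : 0 < u) : Integrable (heatKernel u : E → ℝ) :=
  .of_integral_ne_zero (by simp [integral_heatKernel hu])

theorem integrable_heatKernelDeriv (hu : 0 < u) : Integrable (heatKernelDeriv u : E → ℝ) :=
  ((integrable_heatKernel (by positivity : 0 < 2 * u)).const_mul _).mono'
    (Measurable.aestronglyMeasurable (by fun_prop)) (.of_forall (abs_heatKernelDeriv_le hu))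

/-- The centered Gaussian measure with covariance `u • id`, for `0 < u`. -/
noncomputable def heatMeasure (E : Type*) [NormedAddCommGroup E] [InnerProductSpace ℝ E]
    [MeasurableSpace E] [BorelSpace E] [FiniteDimensional ℝ E] (u : ℝ) : Measure E :=
  volume.withDensity fun x => ENNReal.ofReal (heatKernel u x)

instance : SFinite (heatMeasure E u) := by
  unfold heatMeasure
  infer_instance

theorem isProbabilityMeasure_heatMeasure (hu : 0 < u) : IsProbabilityMeasure (heatMeasure E u) := by
  refine ⟨?_⟩
  rw [heatMeasure, withDensity_apply _ .univ, setLIntegral_univ,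
    ← ofReal_integral_eq_lintegral_ofReal (integrable_heatKernel hu)
      (.of_forall (heatKernel_nonneg hu.le)), integral_heatKernel hu, ENNReal.ofReal_one]

theorem heatMeasure_compl_ball_le (hu : 0 < u) {r : ℝ} (hr : 0 ≤ r) :
    heatMeasure E u (Metric.ball 0 r)ᶜ ≤
      ENNReal.ofReal (2 ^ (finrank ℝ E / 2 : ℝ) * exp (-(r ^ 2 / (4 * u)))) := by
  have h2u : 0 < 2 * u := by positivity
  let C : ℝ := 2 ^ (finrank ℝ E / 2 : ℝ) * exp (-(r ^ 2 / (4 * u)))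
  have hbound : ∀ x ∈ (Metric.ball (0 : E) r)ᶜ, ENNReal.ofReal (heatKernel u x) ≤
      ENNReal.ofReal C * ENNReal.ofReal (heatKernel (2 * u) x) := by
    intro x hx
    have hrx : r ≤ ‖x‖ := by simpa using hx
    have hK : 0 ≤ heatKernel (2 * u) x := heatKernel_nonneg h2u.le x
    rw [← ENNReal.ofReal_mul (by positivity), heatKernel_eq_exp_mul_heatKernel_two_mul hu x]
    simp only [C]
    gcongr
  have := isProbabilityMeasure_heatMeasure (E := E) h2u
  calc heatMeasure E u (Metric.ball 0 r)ᶜ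
      = ∫⁻ x in (Metric.ball 0 r)ᶜ, ENNReal.ofReal (heatKernel u x) :=
        withDensity_apply _ Metric.isOpen_ball.measurableSet.compl
    _ ≤ ∫⁻ x in (Metric.ball 0 r)ᶜ, ENNReal.ofReal C * ENNReal.ofReal (heatKernel (2 * u) x) :=
        setLIntegral_mono' Metric.isOpen_ball.measurableSet.compl hbound
    _ = ENNReal.ofReal C * heatMeasure E (2 * u) (Metric.ball 0 r)ᶜ := by
        rw [lintegral_const_mul _ (by fun_prop), heatMeasure,
          withDensity_apply _ Metric.isOpen_ball.measurableSet.compl]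
    _ ≤ ENNReal.ofReal C := mul_le_of_le_one_right' prob_le_one

theorem tendsto_heatMeasure_of_mem_nhds_zero {V : Set E} (hV : V ∈ 𝓝 0) :
    Tendsto (fun u => heatMeasure E u V) (𝓝[>] 0) (𝓝 1) := by
  obtain ⟨r, hr, hrV⟩ := Metric.mem_nhds_iff.1 hV
  set tail : ℝ → ℝ≥0∞ := fun u =>
    ENNReal.ofReal (2 ^ (finrank ℝ E / 2 : ℝ) * exp (-(r ^ 2 / (4 * u))))
  have htail : Tendsto tail (𝓝[>] 0) (𝓝 0) := by
    have hexponent : Tendsto (fun u => r ^ 2 / 4 * u⁻¹) (𝓝[>] 0) atTop :=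
      tendsto_inv_nhdsGT_zero.const_mul_atTop (by positivity)
    have hexp := (tendsto_exp_neg_atTop_nhds_zero.comp hexponent).const_mul
      (2 ^ (finrank ℝ E / 2 : ℝ))
    rw [mul_zero] at hexp
    refine ENNReal.ofReal_zero ▸ (ENNReal.tendsto_ofReal hexp).congr fun u => ?_
    simp only [tail, Function.comp_apply, div_eq_mul_inv, mul_inv, mul_assoc]
  have hlower : Tendsto (fun u => 1 - tail u) (𝓝[>] 0) (𝓝 1) := by
    simpa using ENNReal.Tendsto.sub tendsto_const_nhds htail (.inl ENNReal.one_ne_top)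
  refine tendsto_of_tendsto_of_tendsto_of_le_of_le' hlower tendsto_const_nhds ?_ ?_
  all_goals
    filter_upwards [self_mem_nhdsWithin] with u hu
    have := isProbabilityMeasure_heatMeasure (E := E) hu
  · refine tsub_le_iff_right.2 ?_
    calc 1 = heatMeasure E u univ := measure_univ.symm
      _ ≤ heatMeasure E u V + heatMeasure E u Vᶜ := by
        rw [← union_compl_self V]; exact measure_union_le _ _
      _ ≤ heatMeasure E u V + tail u := by
        gcongr
        exact (measure_mono (compl_subset_compl.2 hrV)).trans (heatMeasure_compl_ball_le hu hr.le)
  · exact prob_le_one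

variable {μ : Measure E} [IsFiniteMeasure μ]

theorem conv_heatMeasure_eq_withDensity (hu : 0 ≤ u) :
    μ ∗ heatMeasure E u =
      volume.withDensity fun x => ENNReal.ofReal (∫ z, heatKernel u (x - z) ∂μ) := by
  rw [heatMeasure, conv_withDensity_eq_withDensity_lintegral (by fun_prop)]
  congr with x
  simp only [neg_add_eq_sub]
  exact (ofReal_integral_eq_lintegral_ofReal (integrable_heatKernel_sub hu x)
    (.of_forall fun z => heatKernel_nonneg hu _)).symm

theorem ofReal_integral_heatKernel_le_add (hs : 0 < s) (hst : s ≤ t) (x : E) :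
    ENNReal.ofReal (∫ z, heatKernel s (x - z) ∂μ) ≤
      ENNReal.ofReal (∫ z, heatKernel t (x - z) ∂μ) +
        ∫⁻ u in Ioc s t, ‖∫ z, heatKernelDeriv u (x - z) ∂μ‖ₑ := by
  have ht : 0 ≤ t := hs.le.trans hst
  have hftc := enorm_integral_sub_integral_le_lintegral_of_hasDerivAt hst
    (fun z u hu => hasDerivAt_heatKernel (hs.trans_le hu.1) (x - z))
    (integrable_heatKernel_sub (μ := μ) hs.le x) (integrable_heatKernel_sub ht x)
    (integrable_heatKernelDeriv_sub hs x)
  refine le_trans ?_ (add_le_add_right hftc _)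
  rw [← ofReal_norm, ← ENNReal.ofReal_add
    (integral_nonneg fun z => heatKernel_nonneg ht _) (norm_nonneg _)]
  refine ENNReal.ofReal_le_ofReal (sub_le_iff_le_add'.1 ?_)
  rw [norm_sub_rev]
  exact le_abs_self _

theorem conv_heatMeasure_apply_le_add (hs : 0 < s) (hst : s ≤ t) {A : Set E}
    (hA : MeasurableSet A) :
    (μ ∗ heatMeasure E s) A ≤ (μ ∗ heatMeasure E t) A +
      ∫⁻ u in Ioc s t, ∫⁻ x, ‖∫ z, heatKernelDeriv u (x - z) ∂μ‖ₑ := by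
  have hmeas : Measurable fun p : E × ℝ => ‖∫ z, heatKernelDeriv p.2 (p.1 - z) ∂μ‖ₑ := by
    have hkernel : Measurable fun q : (E × ℝ) × E => heatKernelDeriv q.1.2 (q.1.1 - q.2) := by
      fun_prop
    exact hkernel.stronglyMeasurable.integral_prod_right'.measurable.enorm
  rw [conv_heatMeasure_eq_withDensity hs.le, conv_heatMeasure_eq_withDensity (hs.le.trans hst),
    withDensity_apply _ hA, withDensity_apply _ hA]
  calc ∫⁻ x in A, ENNReal.ofReal (∫ z, heatKernel s (x - z) ∂μ)
      ≤ ∫⁻ x in A, (ENNReal.ofReal (∫ z, heatKernel t (x - z) ∂μ) +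
          ∫⁻ u in Ioc s t, ‖∫ z, heatKernelDeriv u (x - z) ∂μ‖ₑ) :=
        lintegral_mono (ofReal_integral_heatKernel_le_add hs hst)
    _ = (∫⁻ x in A, ENNReal.ofReal (∫ z, heatKernel t (x - z) ∂μ)) +
          ∫⁻ x in A, ∫⁻ u in Ioc s t, ‖∫ z, heatKernelDeriv u (x - z) ∂μ‖ₑ :=
        lintegral_add_right _ hmeas.lintegral_prod_right'
    _ = (∫⁻ x in A, ENNReal.ofReal (∫ z, heatKernel t (x - z) ∂μ)) +
          ∫⁻ u in Ioc s t, ∫⁻ x in A, ‖∫ z, heatKernelDeriv u (x - z) ∂μ‖ₑ := by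
        rw [lintegral_lintegral_swap hmeas.aemeasurable]
    _ ≤ _ := by
        gcongr
        exact Measure.restrict_le_self

theorem measure_le_conv_heatMeasure_add (ht : 0 < t) {U : Set E} (hU : IsOpen U) :
    μ U ≤ (μ ∗ heatMeasure E t) U +
      ∫⁻ u in Ioc 0 t, ∫⁻ x, ‖∫ z, heatKernelDeriv u (x - z) ∂μ‖ₑ := by
  refine (measure_le_liminf_conv_of_isOpen (l := 𝓝[>] (0 : ℝ))
    (fun _ => tendsto_heatMeasure_of_mem_nhds_zero) hU).trans ?_
  refine liminf_le_of_frequently_le' (Eventually.frequently ?_)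
  filter_upwards [Ioc_mem_nhdsGT ht] with s hs
  refine (conv_heatMeasure_apply_le_add hs.1 hs.2 hU.measurableSet).trans ?_
  gcongr
  exact hs.1.le

theorem ofReal_integral_abs_integral_deriv_heatKernel (hu : 0 < u) :
    ENNReal.ofReal (∫ x, |∫ z, deriv (fun v => heatKernel v (x - z)) u ∂μ|) =
      ∫⁻ x, ‖∫ z, deriv (fun v => heatKernel v (x - z)) u ∂μ‖ₑ := by
  simp only [(hasDerivAt_heatKernel hu _).deriv]
  exact ofReal_integral_norm_eq_lintegral_enorm
    (integrable_integral_sub (integrable_heatKernelDeriv hu))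

end HeatKernel

theorem statement5_general {E : Type*} [NormedAddCommGroup E] [InnerProductSpace ℝ E]
    [FiniteDimensional ℝ E] [MeasurableSpace E] [BorelSpace E] (μ : Measure E)
    [IsFiniteMeasure μ] {y : ℝ} (hy : 0 < y)
    (h : ∫⁻ u in Ioo 0 y, ∫⁻ x, ‖∫ z, deriv (fun v => heatKernel v (x - z)) u ∂μ‖ₑ < ∞) :
    μ ≪ volume := by
  have hderiv : ∫⁻ u in Ioo 0 y, ∫⁻ x, ‖∫ z, heatKernelDeriv u (x - z) ∂μ‖ₑ ≠ ∞ := by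
    refine (setLIntegral_congr_fun measurableSet_Ioo fun u hu => ?_).trans_ne h.ne
    simp only [(hasDerivAt_heatKernel hu.1 _).deriv]
  refine absolutelyContinuous_of_forall_isOpen_le_add fun ε hε => ?_
  have hsmall := (tendsto_setLIntegral_Ioc_nhdsGT hy hderiv).eventually_le_const hε
  obtain ⟨t, htε, ht⟩ := (hsmall.and self_mem_nhdsWithin).exists
  have := isProbabilityMeasure_heatMeasure (E := E) ht
  refine ⟨μ ∗ heatMeasure E t, inferInstance, ?_, fun U hU => ?_⟩
  · rw [conv_heatMeasure_eq_withDensity ht.le]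
    exact withDensity_absolutelyContinuous _ _
  · exact (measure_le_conv_heatMeasure_add ht hU).trans (by gcongr)

theorem gaussDy_eq_deriv_heatKernel (d : ℕ) (u : ℝ) (x : EuclideanSpace ℝ (Fin d)) :
    gaussDy d u x = deriv (fun v => heatKernel v x) u := by
  simp [gaussDy, gaussD, heatKernel]

theorem statement5 {d : ℕ} (μ : Measure (EuclideanSpace ℝ (Fin d)))
    [IsProbabilityMeasure μ] (y : ℝ) (hy : 0 < y)
    (h : ∫⁻ u in Set.Ioo (0 : ℝ) y,
        ENNReal.ofReal (∫ x, |∫ z, gaussDy d u (x - z) ∂μ|) < ⊤) :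
    μ ≪ volume := by
  simp only [gaussDy_eq_deriv_heatKernel] at h
  exact statement5_general μ hy <| (setLIntegral_congr_fun measurableSet_Ioo fun u hu =>
    ofReal_integral_abs_integral_deriv_heatKernel hu.1).symm.trans_lt h
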